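/- Let P be a set of primes with natural density δ ∈ (0,1] and let η > 0. Then for every ε ∈ (0,1) there exist c > 0 and Q₀ ≥ 3 such that for all Q ≥ Q₀ one has ∑_{q ≤ Q, q squarefree, every prime factor of q lies in P} η^{ω(q)} ≥ c·Q·(log Q)^{(1−ε)δη − 1}, where ω(q) denotes the number of distinct prime factors of q. -/

import Mathlib

open scoped Classical
open Filter

lemma abelD (a : ℕ → ℝ) (h0 : a 0 = 0) (N : ℕ) :
    ∑ k ∈ Finset.range (N+1), a k / k =
      (∑ k ∈ Finset.range (N+1), a k) / (N+1) +
      ∑ n ∈ Finset.range (N+1), (∑ k ∈ Finset.range (n+1), a k) / ((n:ℝ) * (n+1)) := by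
  induction N with
  | zero => simp [h0]
  | succ N ih =>
    rw [Finset.sum_range_succ, ih, Finset.sum_range_succ _ (N+1), Finset.sum_range_succ _ (N+1)]
    rw [Finset.sum_range_succ _ (N+1)]
    push_cast
    field_simp
    ring

lemma lemB (N : ℕ) (hN : 1 ≤ N) :
    ∑ p ∈ (Finset.range (N+1)).filter Nat.Prime, Real.log p / p ≤ 2 * (2 + Real.log N) := by
  have hth : ∀ n : ℕ, (∑ k ∈ Finset.range (n+1), (if k.Prime then Real.log k else 0)) ≤ 2 * (n:ℝ) := by
    intro n
    have h1 := Chebyshev.theta_le_log4_mul_x (x := n) (by positivity)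
    rw [Chebyshev.theta_eq_sum_Icc, Nat.floor_natCast, Finset.sum_filter] at h1
    have h4 : Real.log 4 ≤ 2 := by
      have : Real.log 4 = 2 * Real.log 2 := by
        rw [show (4:ℝ) = 2^2 by norm_num, Real.log_pow]; norm_num
      have := Real.log_two_lt_d9
      linarith
    rw [Nat.range_succ_eq_Icc_zero]
    refine h1.trans ?_
    gcongr
  have h := abelD (fun k => if k.Prime then Real.log k else 0) (by simp) N
  rw [Finset.sum_filter]
  have e : ∀ k : ℕ, (if k.Prime then Real.log k / k else 0) = (if k.Prime then Real.log k else 0) / (k:ℝ) := by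
    intro k; split_ifs <;> simp
  simp only [e]
  rw [h]
  have hA : (∑ k ∈ Finset.range (N+1), (if k.Prime then Real.log k else 0)) / ((N:ℝ)+1) ≤ 2 := by
    rw [div_le_iff₀ (by positivity)]
    linarith [hth N]
  have hH : ∑ n ∈ Finset.range (N+1), (∑ k ∈ Finset.range (n+1), (if k.Prime then Real.log k else 0)) / ((n:ℝ) * (n+1)) ≤ 2 * ((harmonic N : ℚ):ℝ) := by
    rw [Finset.sum_range_succ']
    simp only [harmonic, Nat.cast_zero, zero_mul, div_zero, add_zero]
    push_cast
    rw [Finset.mul_sum]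
    refine Finset.sum_le_sum fun n _ => ?_
    rw [div_le_iff₀ (by positivity)]
    have := hth (n+1)
    push_cast at this
    refine this.trans ?_
    have : 2 * ((n:ℝ)+1)⁻¹ * (((n:ℝ)+1) * ((n:ℝ)+1+1)) = 2 * (n+1+1) := by field_simp
    rw [this]; linarith
  have := harmonic_le_one_add_log N
  linarith


lemma sq_sum : ∃ C : ℝ, 0 ≤ C ∧ ∀ s : Finset ℕ, ∑ k ∈ s, 1 / (k:ℝ)^2 ≤ C := by
  have hs : Summable (fun k : ℕ => 1 / (k:ℝ)^2) := Real.summable_one_div_nat_pow.mpr (by norm_num)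
  exact ⟨∑' k : ℕ, 1 / (k:ℝ)^2, tsum_nonneg (fun _ => by positivity),
    fun s => hs.sum_le_tsum s (fun _ _ => by positivity)⟩

noncomputable def invHom : ℕ →* ℝ where
  toFun n := (n:ℝ)⁻¹
  map_one' := by simp
  map_mul' a b := by simp [mul_comm]

lemma lemC : ∃ C : ℝ, ∀ N : ℕ, 2 ≤ N →
    Real.log (Real.log N) ≤ ∑ p ∈ (Finset.range (N+1)).filter Nat.Prime, 1 / (p:ℝ) + C := by
  obtain ⟨C, hC0, hC⟩ := sq_sum
  refine ⟨2 * C, fun N hN => ?_⟩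
  have h := (EulerProduct.summable_and_hasSum_smoothNumbers_prod_primesBelow_geometric
    (f := invHom) (fun {p} hp => by
      have : (1:ℝ) < p := by exact_mod_cast hp.one_lt
      simp only [invHom, MonoidHom.coe_mk, OneHom.coe_mk, norm_inv, Real.norm_natCast]
      exact inv_lt_one_of_one_lt₀ this) (N+1)).2
  simp only [invHom, MonoidHom.coe_mk, OneHom.coe_mk] at h
  have h1 := sum_le_hasSum ((Finset.Icc 1 N).subtype (· ∈ (N+1).smoothNumbers))
    (fun i _ => by positivity) h
  rw [Finset.sum_subtype_of_mem (fun m : ℕ => (m:ℝ)⁻¹) (by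
    intro m hm
    rw [Finset.mem_Icc] at hm
    rw [Nat.mem_smoothNumbers]
    refine ⟨by omega, fun p hp => ?_⟩
    have := Nat.le_of_mem_primeFactorsList hp
    omega)] at h1
  have h2 : Real.log N ≤ ∑ m ∈ Finset.Icc 1 N, (m:ℝ)⁻¹ := by
    have := log_add_one_le_harmonic N
    rw [harmonic_eq_sum_Icc] at this
    push_cast at this
    refine le_trans (Real.log_le_log (by positivity) (by linarith)) this
  have hpos : 0 < Real.log N := Real.log_pos (by exact_mod_cast hN)
  have h3 := Real.log_le_log hpos (h2.trans h1)
  rw [Real.log_prod] at h3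
  · refine h3.trans ?_
    have hh : ∑ p ∈ (Finset.range (N+1)).filter Nat.Prime, (1 / (p:ℝ) + 2 * (1/(p:ℝ)^2)) ≤
       ∑ p ∈ (Finset.range (N+1)).filter Nat.Prime, 1 / (p:ℝ) + 2 * C := by
      rw [Finset.sum_add_distrib, ← Finset.mul_sum]
      linarith [hC ((Finset.range (N+1)).filter Nat.Prime)]
    refine le_trans ?_ hh
    rw [Nat.primesBelow]
    refine Finset.sum_le_sum fun p hp => ?_
    have hp2 : (2:ℝ) ≤ p := by exact_mod_cast (Finset.mem_filter.mp hp).2.two_le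
    have h5 : (0:ℝ) < 1 - (p:ℝ)⁻¹ := by
      have : (p:ℝ)⁻¹ < 1 := inv_lt_one_of_one_lt₀ (by linarith)
      linarith
    refine (Real.log_le_sub_one_of_pos (inv_pos.mpr h5)).trans ?_
    have h6 : (1 - (p:ℝ)⁻¹)⁻¹ - 1 = 1 / ((p:ℝ) - 1) := by
      have : (p:ℝ) - 1 ≠ 0 := by linarith
      have : (p:ℝ) ≠ 0 := by linarith
      field_simp
      ring
    rw [h6, show 1 / (p:ℝ) + 2 * (1/(p:ℝ)^2) = (p + 2)/(p:ℝ)^2 by field_simp]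
    rw [div_le_div_iff₀ (by linarith) (by positivity)]
    nlinarith
  · intro p hp
    have hp2 : (2:ℝ) ≤ p := by exact_mod_cast (Nat.prime_of_mem_primesBelow hp).two_le
    have : (p:ℝ)⁻¹ < 1 := inv_lt_one_of_one_lt₀ (by linarith)
    exact inv_ne_zero (by linarith)

lemma lemD (P : Set ℕ) (δ : ℝ)
    (hdens : Tendsto (fun x : ℕ =>
        (((Finset.range (x + 1)).filter (· ∈ P)).card : ℝ) /
          (((Finset.range (x + 1)).filter Nat.Prime).card : ℝ)) atTop (nhds δ))
    (β : ℝ) (hβ : β < δ) : ∃ n0 : ℕ, ∀ n ≥ n0,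
      β * (((Finset.range (n + 1)).filter Nat.Prime).card : ℝ) ≤
      (((Finset.range (n + 1)).filter (· ∈ P)).card : ℝ) := by
  obtain ⟨n0, h⟩ := eventually_atTop.mp (hdens.eventually (lt_mem_nhds hβ))
  refine ⟨n0, fun n hn => ?_⟩
  have h1 := h n hn
  rcases (Nat.cast_nonneg (α := ℝ) ((Finset.range (n + 1)).filter Nat.Prime).card).eq_or_lt with h0 | h0
  · rw [← h0]; simp
  · exact ((lt_div_iff₀ h0).mp h1).le

lemma lemD2 (P : Set ℕ) (hP : ∀ p ∈ P, p.Prime)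
    (β : ℝ) (hβ0 : 0 < β) (n0 : ℕ) (hn0 : ∀ n ≥ n0,
      β * (((Finset.range (n + 1)).filter Nat.Prime).card : ℝ) ≤
      (((Finset.range (n + 1)).filter (· ∈ P)).card : ℝ)) :
    ∃ C : ℝ, ∀ N : ℕ, 2 ≤ N → n0 ≤ N → β * Real.log (Real.log N) - C ≤
      ∑ p ∈ (Finset.range (N+1)).filter (· ∈ P), 1 / (p:ℝ) := by
  obtain ⟨C, hC⟩ := lemC
  let F : ℕ → ℝ := fun n => ((((Finset.range (n + 1)).filter (· ∈ P)).card : ℝ) -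
    β * (((Finset.range (n + 1)).filter Nat.Prime).card : ℝ)) / ((n:ℝ) * (n+1))
  refine ⟨β * C + ∑ n ∈ Finset.range n0, |F n|, fun N h2 hN => ?_⟩
  have e1 : ∀ (S : ℕ → Prop) [DecidablePred S], ¬ S 0 → ∑ p ∈ (Finset.range (N+1)).filter S, 1 / (p:ℝ) =
      (((Finset.range (N + 1)).filter S).card : ℝ) / (N+1) +
      ∑ n ∈ Finset.range (N+1), (((Finset.range (n + 1)).filter S).card : ℝ) / ((n:ℝ) * (n+1)) := by
    intro S _ hS
    have h := abelD (fun k => if S k then 1 else 0) (by simp [hS]) N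
    simp only [Finset.sum_boole] at h
    rw [← h, Finset.sum_filter]
    refine Finset.sum_congr rfl fun k _ => ?_
    split_ifs <;> simp
  have hc := hC N h2
  have e2 := e1 Nat.Prime Nat.not_prime_zero
  have e3 := e1 (· ∈ P) (fun h => Nat.not_prime_zero (hP 0 h))
  have hF : -∑ n ∈ Finset.range n0, |F n| ≤ ∑ n ∈ Finset.range (N+1), F n := by
    rw [← Finset.sum_range_add_sum_Ico F (show n0 ≤ N+1 by omega)]
    have ha : 0 ≤ ∑ n ∈ Finset.Ico n0 (N+1), F n := by
      refine Finset.sum_nonneg fun n hn => ?_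
      have := hn0 n (Finset.mem_Ico.mp hn).1
      exact div_nonneg (by linarith) (by positivity)
    have hb : -∑ n ∈ Finset.range n0, |F n| ≤ ∑ n ∈ Finset.range n0, F n := by
      rw [← Finset.sum_neg_distrib]
      exact Finset.sum_le_sum fun n _ => neg_abs_le _
    linarith
  have hF2 : ∑ n ∈ Finset.range (N+1), F n =
      ∑ n ∈ Finset.range (N+1), (((Finset.range (n + 1)).filter (· ∈ P)).card : ℝ) / ((n:ℝ) * (n+1))
      - β * ∑ n ∈ Finset.range (N+1), (((Finset.range (n + 1)).filter Nat.Prime).card : ℝ) / ((n:ℝ) * (n+1)) := by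
    rw [Finset.mul_sum, ← Finset.sum_sub_distrib]
    refine Finset.sum_congr rfl fun n _ => ?_
    simp only [F]
    rw [sub_div, mul_div_assoc]
  have h4 : β * ((((Finset.range (N + 1)).filter Nat.Prime).card : ℝ) / (N+1)) ≤
     (((Finset.range (N + 1)).filter (· ∈ P)).card : ℝ) / (N+1) := by
    rw [← mul_div_assoc]
    have := hn0 N hN
    gcongr
  have h5 := mul_le_mul_of_nonneg_left hc hβ0.le
  rw [e2] at h5
  rw [e3]
  rw [hF2] at hF
  nlinarith

lemma lemE (P : Set ℕ) (hP : ∀ p ∈ P, p.Prime)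
    (β : ℝ) (hβ0 : 0 < β) (n0 : ℕ) (hn0 : ∀ n ≥ n0,
      β * (((Finset.range (n + 1)).filter Nat.Prime).card : ℝ) ≤
      (((Finset.range (n + 1)).filter (· ∈ P)).card : ℝ)) (η : ℝ) (hη : 0 < η) :
    ∃ c : ℝ, 0 < c ∧ ∀ N : ℕ, 2 ≤ N → n0 ≤ N → c * Real.log N ^ (β * η) ≤
      ∏ p ∈ (Finset.range (N+1)).filter (· ∈ P), (1 + η / (p:ℝ)) := by
  obtain ⟨C, hC⟩ := lemD2 P hP β hβ0 n0 hn0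
  obtain ⟨C2, hC20, hC2⟩ := sq_sum
  refine ⟨Real.exp (-(η * C) - η^2 * C2), Real.exp_pos _, fun N h2 hN => ?_⟩
  have hpos : 0 < Real.log N := Real.log_pos (by exact_mod_cast h2)
  have h1 : ∀ p ∈ (Finset.range (N+1)).filter (· ∈ P),
      Real.exp (η * (1/(p:ℝ)) - η^2 * (1/(p:ℝ)^2)) ≤ 1 + η / (p:ℝ) := by
    intro p hp
    have hp0 : (0:ℝ) < p := by exact_mod_cast (hP p (Finset.mem_filter.mp hp).2).pos
    have hx : 0 < η / p := by positivity
    have : η * (1/(p:ℝ)) - η^2 * (1/(p:ℝ)^2) = η/p - (η/p)^2 := by field_simp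
    rw [this, ← Real.le_log_iff_exp_le (by positivity)]
    refine le_trans ?_ (Real.one_sub_inv_le_log_of_pos (by positivity))
    have : 1 - (1 + η/p)⁻¹ = (η/p) / (1+η/p) := by
      generalize η/p = x at *
      field_simp; ring
    rw [this, le_div_iff₀ (by positivity)]
    nlinarith [pow_pos hx 3]
  refine le_trans ?_ (Finset.prod_le_prod (fun _ _ => (Real.exp_pos _).le) h1)
  rw [← Real.exp_sum, Real.rpow_def_of_pos hpos, ← Real.exp_add, Real.exp_le_exp,
    Finset.sum_sub_distrib, ← Finset.mul_sum, ← Finset.mul_sum]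
  have a1 := mul_le_mul_of_nonneg_left (hC N h2 hN) hη.le
  have a2 := mul_le_mul_of_nonneg_left (hC2 ((Finset.range (N+1)).filter (· ∈ P))) (sq_nonneg η)
  nlinarith

lemma lemF (A : Finset ℕ) (hA : ∀ p ∈ A, p.Prime) (η : ℝ) (hη : 0 < η) (X : ℝ) (hX : 1 < X)
    (h : η * ∑ p ∈ A, Real.log p / p ≤ Real.log X / 2) :
    (∏ p ∈ A, (1 + η / (p:ℝ))) / 2 ≤
      ∑ s ∈ A.powerset.filter (fun s => ((∏ p ∈ s, p : ℕ) : ℝ) ≤ X), ∏ p ∈ s, (η / (p:ℝ)) := by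
  have hlX := Real.log_pos hX
  have hw : ∀ s : Finset ℕ, 0 ≤ ∏ p ∈ s, (η / (p:ℝ)) :=
    fun s => Finset.prod_nonneg fun _ _ => by positivity
  set W := ∏ p ∈ A, (1 + η / (p:ℝ)) with hW
  have hW' : W = ∑ s ∈ A.powerset, ∏ p ∈ s, (η / (p:ℝ)) := Finset.prod_one_add A
  have hW0 : 0 ≤ W := Finset.prod_nonneg fun _ _ => by positivity
  -- moment
  have hM : ∑ s ∈ A.powerset, (∏ p ∈ s, (η / (p:ℝ))) * ∑ p ∈ s, Real.log p ≤
      (η * ∑ p ∈ A, Real.log p / p) * W := by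
    have e1 : ∀ s ∈ A.powerset, (∏ p ∈ s, (η / (p:ℝ))) * ∑ p ∈ s, Real.log p =
        ∑ p ∈ A, if p ∈ s then (∏ p ∈ s, (η / (p:ℝ))) * Real.log p else 0 := by
      intro s hs
      rw [← Finset.sum_filter, Finset.filter_mem_eq_inter,
        Finset.inter_eq_right.mpr (Finset.mem_powerset.mp hs), Finset.mul_sum]
    rw [Finset.sum_congr rfl e1, Finset.sum_comm, Finset.mul_sum, Finset.sum_mul]
    refine Finset.sum_le_sum fun p hp => ?_
    have hl : 0 ≤ Real.log p := Real.log_natCast_nonneg p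
    rw [← Finset.sum_filter, ← Finset.sum_mul]
    have : ∑ s ∈ A.powerset.filter (fun s => p ∈ s), ∏ q ∈ s, (η / (q:ℝ)) ≤ (η / p) * W := by
      rw [hW', Finset.mul_sum]
      calc _ = ∑ s ∈ A.powerset.filter (fun s => p ∈ s), (η/p) * ∏ q ∈ s.erase p, (η / (q:ℝ)) := by
            refine Finset.sum_congr rfl fun s hs => ?_
            exact (Finset.mul_prod_erase s (fun q : ℕ => η / (q:ℝ)) (Finset.mem_filter.mp hs).2).symm
        _ = ∑ t ∈ (A.powerset.filter (fun s => p ∈ s)).image (fun s : Finset ℕ => s.erase p), (η/p) * ∏ q ∈ t, (η / ((q:ℕ):ℝ)) := by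
            rw [Finset.sum_image]
            intro s hs t ht hst
            simp only [Finset.coe_filter, Set.mem_ofPred_eq] at hs ht
            rw [← Finset.insert_erase hs.2, ← Finset.insert_erase ht.2]
            simp only at hst
            rw [hst]
        _ ≤ _ := by
            refine Finset.sum_le_sum_of_subset_of_nonneg ?_ (fun t _ _ => mul_nonneg (by positivity) (hw t))
            intro t ht
            obtain ⟨s, hs, rfl⟩ := Finset.mem_image.mp ht
            rw [Finset.mem_filter, Finset.mem_powerset] at hs
            exact Finset.mem_powerset.mpr ((Finset.erase_subset _ _).trans hs.1)
    calc _ ≤ ((η / p) * W) * Real.log p := mul_le_mul_of_nonneg_right this hl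
      _ = _ := by ring
  have hsplit := Finset.sum_filter_add_sum_filter_not A.powerset
    (fun s => ((∏ p ∈ s, p : ℕ) : ℝ) ≤ X) (fun s => ∏ p ∈ s, (η / (p:ℝ)))
  rw [← hW'] at hsplit
  have htail : Real.log X * ∑ s ∈ A.powerset.filter (fun s => ¬ ((∏ p ∈ s, p : ℕ) : ℝ) ≤ X), ∏ p ∈ s, (η / (p:ℝ)) ≤ Real.log X / 2 * W := by
    refine le_trans ?_ (hM.trans (mul_le_mul_of_nonneg_right h hW0))
    rw [Finset.mul_sum]
    refine le_trans (Finset.sum_le_sum fun s hs => ?_) (Finset.sum_le_sum_of_subset_of_nonneg (Finset.filter_subset (fun s => ¬ ((∏ p ∈ s, p : ℕ) : ℝ) ≤ X) _)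
      (fun s _ _ => mul_nonneg (hw s) (Finset.sum_nonneg fun p _ => Real.log_natCast_nonneg p)))
    rw [mul_comm]
    refine mul_le_mul_of_nonneg_left ?_ (hw s)
    rw [Finset.mem_filter, Finset.mem_powerset] at hs
    have : ∑ p ∈ s, Real.log p = Real.log ((∏ p ∈ s, p : ℕ) : ℝ) := by
      rw [Nat.cast_prod, Real.log_prod]
      intro p hp
      exact_mod_cast (hA p (hs.1 hp)).ne_zero
    rw [this]
    exact Real.log_le_log (by linarith) (not_le.mp hs.2).le
  nlinarith

lemma lemG (P : Set ℕ)
    (β : ℝ) (hβ0 : 0 < β) (n0 : ℕ) (hn0 : ∀ n ≥ n0,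
      β * (((Finset.range (n + 1)).filter Nat.Prime).card : ℝ) ≤
      (((Finset.range (n + 1)).filter (· ∈ P)).card : ℝ)) :
    ∃ c : ℝ, 0 < c ∧ ∃ y0 : ℝ, 2 ≤ y0 ∧ ∀ y : ℝ, y0 ≤ y → ∀ N : ℕ, (N:ℝ) ≤ √y →
      c * y / Real.log y ≤ (((Finset.range (⌊y⌋₊ + 1)).filter (fun p => p ∈ P ∧ N < p)).card : ℝ) := by
  have hl1 : ∀ᶠ y : ℝ in atTop, Real.log (y+2) ≤ 0.1 * y := by
    have := (Real.isLittleO_log_id_atTop.comp_tendsto (tendsto_atTop_add_const_right atTop (2:ℝ) tendsto_id)).bound (show (0:ℝ) < 0.05 by norm_num)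
    filter_upwards [this, eventually_ge_atTop (2:ℝ)] with y hy h2
    simp only [Function.comp, id, Real.norm_eq_abs] at hy
    rw [abs_of_nonneg (show 0 ≤ y + 2 by linarith)] at hy
    have := (le_abs_self _).trans hy
    linarith
  have hl2 : ∀ᶠ y : ℝ in atTop, (√y + 1) * Real.log y ≤ β/8 * y := by
    have h := (isLittleO_log_rpow_atTop (show (0:ℝ) < 1/2 by norm_num)).bound (show 0 < β/16 by positivity)
    filter_upwards [h, eventually_ge_atTop (1:ℝ)] with y hy h1
    rw [← Real.sqrt_eq_rpow, Real.norm_eq_abs, Real.norm_eq_abs, abs_of_nonneg (Real.sqrt_nonneg y)] at hy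
    have a := (le_abs_self _).trans hy
    have b : 1 ≤ √y := Real.one_le_sqrt.mpr h1
    have c := Real.mul_self_sqrt (show 0 ≤ y by linarith)
    calc (√y + 1) * Real.log y ≤ (√y+1) * (β/16 * √y) := by gcongr
      _ ≤ (√y + √y) * (β/16 * √y) := by gcongr
      _ = β / 8 * (√y * √y) := by ring
      _ = _ := by rw [c]
  obtain ⟨y1, hy1⟩ := eventually_atTop.mp (hl1.and hl2)
  refine ⟨β/8, by positivity, max (max y1 10) (n0+1), le_trans (by norm_num) ((le_max_right y1 10).trans (le_max_left _ _)), fun y hy N hN => ?_⟩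
  simp only [max_le_iff] at hy
  obtain ⟨⟨hya, hyb⟩, hyc⟩ := hy
  obtain ⟨g1, g2⟩ := hy1 y hya
  have hlog : 0 < Real.log y := Real.log_pos (by linarith)
  have hpi := Chebyshev.pi_ge' (x := y) (by linarith)
  have hc := hn0 ⌊y⌋₊ (Nat.le_floor (by linarith))
  rw [Nat.primeCounting, Nat.primeCounting', Nat.count_eq_card_filter_range, div_le_iff₀ hlog] at hpi
  have hsub : (Finset.range (⌊y⌋₊ + 1)).filter (· ∈ P) ⊆
     (Finset.range (⌊y⌋₊ + 1)).filter (fun p => p ∈ P ∧ N < p) ∪ Finset.range (N+1) := by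
    intro p hp
    simp only [Finset.mem_union, Finset.mem_filter, Finset.mem_range] at hp ⊢
    by_cases h : N < p
    · left; exact ⟨hp.1, hp.2, h⟩
    · right; omega
  have hcard := (Finset.card_le_card hsub).trans (Finset.card_union_le _ _)
  rw [Finset.card_range] at hcard
  have hcard' : (((Finset.range (⌊y⌋₊ + 1)).filter (· ∈ P)).card : ℝ) ≤
    (((Finset.range (⌊y⌋₊ + 1)).filter (fun p => p ∈ P ∧ N < p)).card : ℝ) + (N + 1) := by
    exact_mod_cast hcard
  rw [div_le_iff₀ hlog]
  have hl := Real.log_two_gt_d9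
  have q1 : y / 4 ≤ (((Finset.range (⌊y⌋₊ + 1)).filter Nat.Prime).card : ℝ) * Real.log y := by
    have : (y - 1) * 0.6 ≤ (y-1) * Real.log 2 := by
      apply mul_le_mul_of_nonneg_left <;> linarith
    linarith
  have q2 := mul_le_mul_of_nonneg_left q1 hβ0.le
  have q3 := mul_le_mul_of_nonneg_right (hc.trans hcard') hlog.le
  have q4 : ((N:ℝ) + 1) * Real.log y ≤ (√y + 1) * Real.log y := by gcongr
  nlinarith

lemma lemH (P : Set ℕ) (hP : ∀ p ∈ P, p.Prime) (η : ℝ) (hη : 0 < η) (Q X : ℝ) (hQ : 0 ≤ Q) (N : ℕ) :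
    ∑ s ∈ ((Finset.range (N+1)).filter (· ∈ P)).powerset.filter (fun s => ((∏ p ∈ s, p : ℕ) : ℝ) ≤ X),
      η ^ (s.card + 1) * (((Finset.range (⌊Q / ((∏ p ∈ s, p : ℕ) : ℝ)⌋₊ + 1)).filter (fun p => p ∈ P ∧ N < p)).card : ℝ)
     ≤ ∑ q ∈ (Finset.range (⌊Q⌋₊ + 1)).filter
            (fun q => Squarefree q ∧ ∀ p ∈ q.primeFactors, p ∈ P),
          η ^ q.primeFactors.card := by
  set A := (Finset.range (N+1)).filter (· ∈ P) with hA
  set B := A.powerset.filter (fun s => ((∏ p ∈ s, p : ℕ) : ℝ) ≤ X) with hB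
  let D : Finset ℕ → Finset ℕ := fun s => (Finset.range (⌊Q / ((∏ p ∈ s, p : ℕ) : ℝ)⌋₊ + 1)).filter (fun p => p ∈ P ∧ N < p)
  have key : ∀ x ∈ B.sigma D, (∀ p ∈ insert x.2 x.1, p.Prime) ∧ x.2 ∉ x.1 ∧ (∀ p ∈ insert x.2 x.1, p ∈ P)
      ∧ (∀ p ∈ x.1, p ≤ N) ∧ N < x.2 ∧ ((∏ p ∈ insert x.2 x.1, p : ℕ) : ℝ) ≤ Q := by
    rintro ⟨s, p⟩ hx
    simp only [Finset.mem_sigma, hB, hA, D, Finset.mem_filter, Finset.mem_powerset, Finset.mem_range] at hx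
    obtain ⟨⟨hs, hsX⟩, hp, hpP, hNp⟩ := hx
    have hsN : ∀ q ∈ s, q ≤ N := fun q hq => by
      have := hs hq
      simp only [Finset.mem_filter, Finset.mem_range] at this
      omega
    have hsP : ∀ q ∈ s, q ∈ P := fun q hq => (Finset.mem_filter.mp (hs hq)).2
    have hns : p ∉ s := fun h => by have := hsN p h; omega
    have hiP : ∀ q ∈ insert p s, q ∈ P := by
      intro q hq
      rcases Finset.mem_insert.mp hq with rfl | h
      · exact hpP
      · exact hsP q h
    refine ⟨fun q hq => hP q (hiP q hq), hns, hiP, hsN, hNp, ?_⟩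
    simp only
    rw [Finset.prod_insert hns]
    have hpos : (0:ℝ) < ((∏ p ∈ s, p : ℕ) : ℝ) := by
      exact_mod_cast Finset.prod_pos fun q hq => (hP q (hsP q hq)).pos
    have : (p:ℝ) ≤ Q / ((∏ p ∈ s, p : ℕ) : ℝ) := by
      refine le_trans ?_ (Nat.floor_le (by positivity))
      exact_mod_cast Nat.lt_succ_iff.mp hp
    rw [le_div_iff₀ hpos] at this
    rw [Nat.cast_mul]
    exact this
  have e : ∑ s ∈ B, η ^ (s.card + 1) * ((D s).card : ℝ) =
      ∑ x ∈ B.sigma D, η ^ (∏ p ∈ insert x.2 x.1, p : ℕ).primeFactors.card := by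
    have : ∀ x ∈ B.sigma D, η ^ (∏ p ∈ insert x.2 x.1, p : ℕ).primeFactors.card = η ^ (x.1.card + 1) := by
      intro x hx
      obtain ⟨k1, k2, -⟩ := key x hx
      rw [Nat.primeFactors_prod k1, Finset.card_insert_of_notMem k2]
    rw [Finset.sum_congr rfl this, Finset.sum_sigma]
    refine Finset.sum_congr rfl fun s _ => ?_
    simp [mul_comm]
  change ∑ s ∈ B, η ^ (s.card + 1) * ((D s).card : ℝ) ≤ _
  rw [e]
  have himg : ∑ x ∈ B.sigma D, η ^ (∏ p ∈ insert x.2 x.1, p : ℕ).primeFactors.card =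
     ∑ q ∈ (B.sigma D).image (fun x => (∏ p ∈ insert x.2 x.1, p : ℕ)), η ^ q.primeFactors.card := by
    rw [Finset.sum_image]
    intro x hx y hy hxy
    obtain ⟨kx1, kx2, kx3, kx4, kx5, -⟩ := key x hx
    obtain ⟨ky1, ky2, ky3, ky4, ky5, -⟩ := key y hy
    simp only at hxy
    have h := congrArg Nat.primeFactors hxy
    rw [Nat.primeFactors_prod kx1, Nat.primeFactors_prod ky1] at h
    obtain ⟨s, p⟩ := x
    obtain ⟨t, q⟩ := y
    simp only at *
    have hpq : p = q := by
      have : p ∈ insert q t := h ▸ Finset.mem_insert_self p s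
      rcases Finset.mem_insert.mp this with h' | h'
      · exact h'
      · have := ky4 p h'; omega
    subst hpq
    have : s = t := by
      rw [← Finset.erase_insert kx2, h, Finset.erase_insert ky2]
    subst this
    rfl
  rw [himg]
  refine Finset.sum_le_sum_of_subset_of_nonneg ?_ (fun _ _ _ => by positivity)
  intro q hq
  obtain ⟨x, hx, rfl⟩ := Finset.mem_image.mp hq
  obtain ⟨k1, k2, k3, k4, k5, k6⟩ := key x hx
  simp only [Finset.mem_filter, Finset.mem_range]
  refine ⟨Nat.lt_succ_of_le (Nat.le_floor k6), ?_, ?_⟩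
  · refine Finset.squarefree_prod_of_pairwise_isCoprime ?_ (fun p hp => (k1 p hp).squarefree)
    intro p hp q hq hpq
    exact Nat.coprime_iff_isRelPrime.mp ((Nat.coprime_primes (k1 p hp) (k1 q hq)).mpr hpq)
  · rw [Nat.primeFactors_prod k1]; exact k3

theorem stmt4 (P : Set ℕ) (hP : ∀ p ∈ P, p.Prime) (δ : ℝ) (hδ0 : 0 < δ) (hδ1 : δ ≤ 1)
    (hdens : Tendsto (fun x : ℕ =>
        (((Finset.range (x + 1)).filter (· ∈ P)).card : ℝ) /
          (((Finset.range (x + 1)).filter Nat.Prime).card : ℝ)) atTop (nhds δ))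
    (η : ℝ) (hη : 0 < η) :
    ∀ ε : ℝ, 0 < ε → ε < 1 → ∃ c : ℝ, 0 < c ∧ ∃ Q₀ : ℝ, 3 ≤ Q₀ ∧ ∀ Q : ℝ, Q₀ ≤ Q →
      c * Q * Real.log Q ^ ((1 - ε) * δ * η - 1) ≤
        ∑ q ∈ (Finset.range (⌊Q⌋₊ + 1)).filter
            (fun q => Squarefree q ∧ ∀ p ∈ q.primeFactors, p ∈ P),
          η ^ q.primeFactors.card := by
  intro ε hε0 hε1
  have hβ0 : 0 < (1 - ε) * δ := mul_pos (by linarith) hδ0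
  have hβ1 : (1 - ε) * δ < δ := by nlinarith
  generalize (1 - ε) * δ = β at hβ0 hβ1 ⊢
  obtain ⟨n0, hn0⟩ := lemD P δ hdens β hβ1
  obtain ⟨c1, hc1, hE⟩ := lemE P hP β hβ0 n0 hn0 η hη
  obtain ⟨c2, hc2, y0, hy0, hG⟩ := lemG P β hβ0 n0 hn0
  set K : ℝ := max 4 (16 * η) with hK
  have hK4 : 4 ≤ K := le_max_left _ _
  have hKη : 16 * η ≤ K := le_max_right _ _
  have hK0 : 0 < K := by linarith
  have ev : ∀ᶠ Q : ℝ in atTop, 3 ≤ Q ∧ max 4 (n0:ℝ) ≤ Q ^ (1/K) ∧ y0^2 ≤ Q ∧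
      max (32 * η) (2*K) ≤ Real.log Q := by
    filter_upwards [eventually_ge_atTop 3,
      (tendsto_rpow_atTop (show 0 < 1/K by positivity)).eventually_ge_atTop (max 4 (n0:ℝ)),
      eventually_ge_atTop (y0^2),
      Real.tendsto_log_atTop.eventually_ge_atTop (max (32 * η) (2*K))] with Q a b c d
    exact ⟨a, b, c, d⟩
  obtain ⟨Q0, hQ0⟩ := eventually_atTop.mp ev
  refine ⟨η * c2 * c1 / 2 * (1 / (2*K)) ^ (β * η), by positivity, max 3 Q0, le_max_left _ _, fun Q hQ => ?_⟩
  obtain ⟨hQ3, hz, hy, hL⟩ := hQ0 Q ((le_max_right _ _).trans hQ)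
  obtain ⟨hz4, hzn⟩ := max_le_iff.mp hz
  obtain ⟨hLη, hLK⟩ := max_le_iff.mp hL
  have hQpos : 0 < Q := by linarith
  have hLpos : 0 < Real.log Q := by linarith
  set N := ⌊Q ^ (1/K)⌋₊ with hN
  have hN2 : 2 ≤ N := Nat.le_floor (by push_cast; linarith)
  have hNn : n0 ≤ N := Nat.le_floor hzn
  have hNpos : (0:ℝ) < N := by exact_mod_cast (by omega : 0 < N)
  have hNle : (N:ℝ) ≤ Q ^ (1/K) := Nat.floor_le (by positivity)
  have hNge : Q ^ (1/K) / 2 ≤ N := by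
    have := Nat.lt_floor_add_one (Q ^ (1/K))
    rw [← hN] at this
    linarith
  have hlogz : Real.log (Q ^ (1/K)) = Real.log Q / K := by
    rw [Real.log_rpow hQpos]; ring
  have hlogN1 : Real.log N ≤ Real.log Q / K := by
    rw [← hlogz]; exact Real.log_le_log hNpos hNle
  have hlogN2 : 1/(2*K) * Real.log Q ≤ Real.log N := by
    have h := Real.log_le_log (by positivity) hNge
    rw [Real.log_div (by positivity) (by norm_num), hlogz] at h
    have h2 := Real.log_two_lt_d9
    have h3 : 1 ≤ Real.log Q / (2*K) := by rw [le_div_iff₀ (by positivity)]; linarith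
    have h4 : Real.log Q / K = Real.log Q / (2*K) + Real.log Q / (2*K) := by field_simp; ring
    have h5 : 1/(2*K) * Real.log Q = Real.log Q / (2*K) := by ring
    linarith
  have hsq : y0 ≤ √Q := Real.le_sqrt_of_sq_le hy
  have hsq1 : 1 < √Q := by linarith
  set A := (Finset.range (N+1)).filter (· ∈ P) with hA
  have hAp : ∀ p ∈ A, p.Prime := fun p hp => hP p (Finset.mem_filter.mp hp).2
  have hcond : η * ∑ p ∈ A, Real.log p / p ≤ Real.log (√Q) / 2 := by
    have h1 : ∑ p ∈ A, Real.log p / p ≤ 2 * (2 + Real.log N) := by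
      refine le_trans (Finset.sum_le_sum_of_subset_of_nonneg ?_ ?_) (lemB N (by omega))
      · intro p hp
        exact Finset.mem_filter.mpr ⟨(Finset.mem_filter.mp hp).1, hAp p hp⟩
      · intro p _ _
        exact div_nonneg (Real.log_natCast_nonneg p) (by positivity)
    rw [Real.log_sqrt hQpos.le]
    have h2 : η * (Real.log Q / K) ≤ Real.log Q / 16 := by
      rw [← mul_div_assoc, div_le_div_iff₀ hK0 (by norm_num)]
      nlinarith
    have h3 := mul_le_mul_of_nonneg_left h1 hη.le
    have h4 := mul_le_mul_of_nonneg_left hlogN1 hη.le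
    nlinarith
  have hF := lemF A hAp η hη (√Q) hsq1 hcond
  have hEN := hE N hN2 hNn
  rw [← hA] at hEN
  have hH := lemH P hP η hη Q (√Q) hQpos.le N
  rw [← hA] at hH
  refine le_trans ?_ hH
  have step : (η * c2 * Q / Real.log Q) * ∑ s ∈ A.powerset.filter (fun s => ((∏ p ∈ s, p : ℕ) : ℝ) ≤ √Q), ∏ p ∈ s, (η / (p:ℝ)) ≤
     ∑ s ∈ A.powerset.filter (fun s => ((∏ p ∈ s, p : ℕ) : ℝ) ≤ √Q),
      η ^ (s.card + 1) * (((Finset.range (⌊Q / ((∏ p ∈ s, p : ℕ) : ℝ)⌋₊ + 1)).filter (fun p => p ∈ P ∧ N < p)).card : ℝ) := by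
    rw [Finset.mul_sum]
    refine Finset.sum_le_sum fun s hs => ?_
    rw [Finset.mem_filter, Finset.mem_powerset] at hs
    obtain ⟨hsA, hsX⟩ := hs
    have hprod : ∏ p ∈ s, (η / (p:ℝ)) = η ^ s.card / ((∏ p ∈ s, p : ℕ) : ℝ) := by
      rw [Finset.prod_div_distrib, Finset.prod_const, Nat.cast_prod]
    rw [hprod]
    have hm1 : (1:ℝ) ≤ ((∏ p ∈ s, p : ℕ) : ℝ) := by
      exact_mod_cast Finset.prod_pos fun q hq => (hAp q (hsA hq)).pos
    generalize ((∏ p ∈ s, p : ℕ) : ℝ) = m at hsX hm1 ⊢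
    have hyge : √Q ≤ Q / m := by
      rw [le_div_iff₀ (by linarith)]
      calc √Q * m ≤ √Q * √Q := by gcongr
        _ = Q := Real.mul_self_sqrt hQpos.le
    have hyle : Q / m ≤ Q := div_le_self hQpos.le hm1
    have hNy : (N:ℝ) ≤ √(Q/m) := by
      refine le_trans ?_ (Real.sqrt_le_sqrt hyge)
      refine hNle.trans ?_
      rw [Real.sqrt_eq_rpow, Real.sqrt_eq_rpow, ← Real.rpow_mul hQpos.le]
      refine Real.rpow_le_rpow_of_exponent_le (by linarith) ?_
      rw [div_le_iff₀ hK0]; linarith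
    have hg := hG (Q/m) (hsq.trans hyge) N hNy
    have hly : 0 < Real.log (Q/m) := Real.log_pos (by linarith)
    have hg2 : c2 * (Q/m) / Real.log Q ≤ c2 * (Q/m) / Real.log (Q/m) := by
      gcongr
    calc η * c2 * Q / Real.log Q * (η ^ s.card / m) = η ^ (s.card+1) * (c2 * (Q/m) / Real.log Q) := by
          rw [pow_succ]; ring
      _ ≤ _ := by
          refine mul_le_mul_of_nonneg_left (hg2.trans hg) (by positivity)
  refine le_trans ?_ step
  have hpow : (1/(2*K)) ^ (β*η) * Real.log Q ^ (β * η) ≤ Real.log N ^ (β * η) := by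
    rw [← Real.mul_rpow (by positivity) hLpos.le]
    exact Real.rpow_le_rpow (by positivity) hlogN2 (by positivity)
  rw [Real.rpow_sub_one hLpos.ne']
  calc _ = (η * c2 * Q / Real.log Q) * (c1 * ((1/(2*K)) ^ (β*η) * Real.log Q ^ (β * η)) / 2) := by ring
    _ ≤ _ := by
      refine mul_le_mul_of_nonneg_left ?_ (by positivity)
      refine le_trans ?_ hF
      have := mul_le_mul_of_nonneg_left hpow hc1.le
      linarith
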